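/- Let P be a Borel probability measure on ℝ with ∫ x² dP(x) < ∞, let a ∈ ℝ and σ² > 0, let X have law P, let Z ~ N(0, σ²) be independent of X, and set Y = aX + Z. For y ∈ ℝ and i ∈ {0,1,2} define μ_i(y) = ∫ x^i exp(−(y−ax)²/(2σ²)) dP(x), and let f(y) = μ₁(y)/μ₀(y) (the posterior-mean function, so that f(Y) = E[X | Y] almost surely). Then: (i) E[X f(Y)] = E[f(Y)²]; and (ii) f is differentiable on ℝ with f'(y) = (a/σ²)·(μ₂(y)/μ₀(y) − (μ₁(y)/μ₀(y))²), i.e., f'(y) equals a times the posterior variance of X given Y = y divided by σ². -/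

import Mathlib

open MeasureTheory ProbabilityTheory

/-!
The conditional law of `X` given `Y = y` is, by Bayes' formula, the Gaussian-weighted prior
`gaussianPosterior P a v y`, so `f(Y) = E[X | Y]` and (i) is the orthogonality of the conditional
expectation to its error. For (ii), expand the square: the factor depending on `y` alone cancels in
the normalization, so the posterior at `y` is the exponential tilt of the posterior at `0` with
parameter `a y / v`. Its mean and variance are therefore the first two derivatives of a cumulant
generating function, taken at `a y / v`, and the chain rule gives the factor `a / v`.
-/

open scoped ENNReal NNReal

section CondExp

variable {Ω : Type*} {m m₀ : MeasurableSpace Ω} {μ : Measure Ω}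

lemma integral_mul_condExp_eq_integral_sq_condExp [IsFiniteMeasure μ] (hm : m ≤ m₀)
    {X : Ω → ℝ} (hX : MemLp X 2 μ) :
    ∫ ω, X ω * (μ[X | m]) ω ∂μ = ∫ ω, (μ[X | m]) ω ^ 2 ∂μ := by
  have hint : Integrable (X * μ[X | m]) μ := hX.integrable_mul (hX.condExp one_le_two)
  have hpull : μ[X * μ[X | m] | m] =ᵐ[μ] μ[X | m] * μ[X | m] :=
    condExp_mul_of_stronglyMeasurable_right stronglyMeasurable_condExp hint
      (hX.integrable one_le_two)
  calc ∫ ω, (X * μ[X | m]) ω ∂μ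
      = ∫ ω, (μ[X * μ[X | m] | m]) ω ∂μ := (integral_condExp hm).symm
    _ = ∫ ω, (μ[X | m] * μ[X | m]) ω ∂μ := integral_congr_ae hpull
    _ = ∫ ω, (μ[X | m]) ω ^ 2 ∂μ := by simp only [Pi.mul_apply, sq]

end CondExp

section Bayes

variable {E F Ω : Type*} [MeasurableSpace E] [MeasurableSpace F] [MeasurableSpace Ω]
  {P : Measure E} [SFinite P] {ν : Measure F} {g : F × E → ℝ≥0∞}

lemma fst_withDensity_prod [SFinite ν] (hg : Measurable g) :
    ((ν.prod P).withDensity g).fst = ν.withDensity fun y => ∫⁻ x, g (y, x) ∂P := by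
  ext s hs
  rw [Measure.fst_apply hs, withDensity_apply _ (measurable_fst hs), withDensity_apply _ hs,
    ← Set.prod_univ, ← Measure.prod_restrict, Measure.restrict_univ,
    lintegral_prod _ hg.aemeasurable]

/-- The kernel sending `y` to the normalization of the measure with density `g (y, ·)` with respect
to `P`: Bayes' formula for the posterior law, with prior `P` and likelihood `g`. -/
noncomputable def bayesKernel (P : Measure E) [SFinite P] (g : F × E → ℝ≥0∞) : Kernel F E :=
  (Kernel.const F P).withDensity fun y x => g (y, x) / ∫⁻ x', g (y, x') ∂P

lemma measurable_div_lintegral (hg : Measurable g) :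
    Measurable fun p : F × E => g p / ∫⁻ x, g (p.1, x) ∂P :=
  hg.div (hg.lintegral_prod_right'.comp measurable_fst)

lemma bayesKernel_apply (hg : Measurable g) (y : F) :
    bayesKernel P g y = P.withDensity fun x => g (y, x) / ∫⁻ x', g (y, x') ∂P := by
  rw [bayesKernel, Kernel.withDensity_apply _ (measurable_div_lintegral hg), Kernel.const_apply]

lemma isFiniteKernel_bayesKernel (hg : Measurable g) : IsFiniteKernel (bayesKernel P g) := by
  refine ⟨1, ENNReal.one_lt_top, fun y => ?_⟩
  have hgy : Measurable fun x => g (y, x) := hg.comp measurable_prodMk_left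
  simp only [bayesKernel_apply hg, withDensity_apply _ MeasurableSet.univ, setLIntegral_univ,
    div_eq_mul_inv]
  rw [lintegral_mul_const _ hgy]
  exact ENNReal.mul_inv_le_one _

lemma withDensity_prod_eq_fst_compProd_bayesKernel [SFinite ν] (hg : Measurable g)
    [IsFiniteMeasure ((ν.prod P).withDensity g)] :
    (ν.prod P).withDensity g = ((ν.prod P).withDensity g).fst ⊗ₘ bayesKernel P g := by
  set u : F → ℝ≥0∞ := fun y => ∫⁻ x, g (y, x) ∂P with hu
  have hum : Measurable u := hg.lintegral_prod_right'
  have := isFiniteKernel_bayesKernel (P := P) hg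
  have hufin : ∀ᵐ y ∂ν, u y < ∞ := by
    refine ae_lt_top hum ?_
    rw [hu, ← lintegral_prod _ hg.aemeasurable, ← setLIntegral_univ,
      ← withDensity_apply _ MeasurableSet.univ]
    exact measure_ne_top _ _
  have hcancel : (fun p : F × E => u p.1 * (g p / u p.1)) =ᵐ[ν.prod P] g := by
    refine Measure.ae_prod_mem_iff_ae_ae_mem
      (measurableSet_eq_fun (by fun_prop) hg) |>.2 ?_
    filter_upwards [hufin] with y hy
    rcases eq_or_ne (u y) 0 with h0 | h0
    · filter_upwards [(lintegral_eq_zero_iff (hg.comp measurable_prodMk_left)).1 h0] with x hx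
      simpa [h0] using hx.symm
    · exact Filter.Eventually.of_forall fun x => ENNReal.mul_div_cancel h0 hy.ne
  unfold bayesKernel at this ⊢
  rw [fst_withDensity_prod hg, Measure.compProd_withDensity (measurable_div_lintegral hg),
    Measure.compProd_const, prod_withDensity_left hum,
    ← withDensity_mul _ (by fun_prop) (measurable_div_lintegral hg)]
  exact (withDensity_congr_ae hcancel).symm

lemma condDistrib_ae_eq_bayesKernel [SFinite ν] [StandardBorelSpace E] [Nonempty E] {μ : Measure Ω}
    [IsFiniteMeasure μ] {X : Ω → E} {Y : Ω → F} (hX : Measurable X) (hg : Measurable g)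
    (hlaw : μ.map (fun ω => (Y ω, X ω)) = (ν.prod P).withDensity g) :
    condDistrib X Y μ =ᵐ[μ.map Y] bayesKernel P g := by
  have := isFiniteKernel_bayesKernel (P := P) hg
  have : IsFiniteMeasure ((ν.prod P).withDensity g) := hlaw ▸ inferInstance
  refine condDistrib_ae_eq_of_measure_eq_compProd Y hX.aemeasurable ?_
  have hfst : μ.map Y = ((ν.prod P).withDensity g).fst := by rw [← hlaw, Measure.fst_map_prodMk hX]
  rw [hlaw, hfst]
  exact withDensity_prod_eq_fst_compProd_bayesKernel hg

end Bayes

section AdditiveNoise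

lemma map_withDensity_comp {α β : Type*} [MeasurableSpace α] [MeasurableSpace β] {μ : Measure α}
    {ν : Measure β} {T : α → β} (hT : MeasurePreserving T μ ν) {g : β → ℝ≥0∞} (hg : Measurable g) :
    (μ.withDensity (g ∘ T)).map T = ν.withDensity g := by
  ext s hs
  rw [Measure.map_apply hT.measurable hs, withDensity_apply _ (hT.measurable hs),
    withDensity_apply _ hs]
  exact hT.setLIntegral_comp_preimage hs hg

variable {E G Ω : Type*} [MeasurableSpace E] [MeasurableSpace Ω] [AddGroup G] [MeasurableSpace G]
  [MeasurableAdd₂ G] {ν : Measure G} [SFinite ν] [ν.IsAddLeftInvariant]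

lemma measurePreserving_add_swap (P : Measure E) [SFinite P] {φ : E → G} (hφ : Measurable φ) :
    MeasurePreserving (fun p : E × G => (φ p.1 + p.2, p.1)) (P.prod ν) (ν.prod P) :=
  Measure.measurePreserving_swap.comp <|
    (MeasurePreserving.id P).skew_product (g := fun x z => φ x + z) (by fun_prop) <|
      .of_forall fun x => (measurePreserving_add_left ν (φ x)).map_eq

lemma map_add_prodMk_eq_withDensity [MeasurableNeg G] {μ : Measure Ω} [IsFiniteMeasure μ]
    {X : Ω → E} {Z : Ω → G} (hXZ : IndepFun X Z μ) (hX : Measurable X) (hZ : Measurable Z)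
    {φ : E → G} (hφ : Measurable φ) {q : G → ℝ≥0∞} (hq : Measurable q)
    (hZlaw : μ.map Z = ν.withDensity q) :
    μ.map (fun ω => (φ (X ω) + Z ω, X ω)) =
      (ν.prod (μ.map X)).withDensity fun p => q (-φ p.2 + p.1) := by
  have hT := measurePreserving_add_swap (ν := ν) (μ.map X) hφ
  have hjoint : μ.map (fun ω => (X ω, Z ω)) =
      ((μ.map X).prod ν).withDensity fun p => q p.2 := by
    rw [hXZ.map_prod_eq_prod_map_map hX.aemeasurable hZ.aemeasurable, hZlaw,
      prod_withDensity_right hq]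
  rw [← map_withDensity_comp hT (by fun_prop)]
  simp only [Function.comp_def, neg_add_cancel_left]
  rw [← hjoint, Measure.map_map hT.measurable (by fun_prop)]
  rfl

end AdditiveNoise

section Tilted

variable {Ω : Type*} [MeasurableSpace Ω] {μ : Measure Ω}

lemma integral_tilted_eq_div (f g : Ω → ℝ) :
    ∫ x, g x ∂(μ.tilted f) = (∫ x, g x * Real.exp (f x) ∂μ) / ∫ x, Real.exp (f x) ∂μ := by
  rw [integral_tilted, ← integral_div]
  exact integral_congr_ae (.of_forall fun x => by simp only [smul_eq_mul]; ring)

lemma tilted_add_const (f : Ω → ℝ) (c : ℝ) : μ.tilted (fun x => f x + c) = μ.tilted f := by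
  simp only [Measure.tilted, Real.exp_add, integral_mul_const,
    mul_div_mul_right _ _ (Real.exp_ne_zero c)]

lemma hasDerivAt_integral_tilted_mul {X : Ω → ℝ} {t : ℝ}
    (ht : t ∈ interior (integrableExpSet X μ)) :
    HasDerivAt (fun s => (μ.tilted (s * X ·))[X]) Var[X; μ.tilted (t * X ·)] t := by
  have hmean : (fun s => (μ.tilted (s * X ·))[X]) =ᶠ[nhds t] deriv (cgf X μ) := by
    filter_upwards [isOpen_interior.mem_nhds ht] with s hs using integral_tilted_mul_self hs
  have hcgf : HasDerivAt (deriv (cgf X μ)) (iteratedDeriv 2 (cgf X μ) t) t := by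
    rw [iteratedDeriv_succ, iteratedDeriv_one]
    exact (analyticAt_cgf ht).deriv.differentiableAt.hasDerivAt
  rw [variance_tilted_mul ht]
  exact hcgf.congr_of_eventuallyEq hmean

lemma tilted_eq_withDensity_div_lintegral {f : Ω → ℝ}
    (hf : Integrable (fun x => Real.exp (f x)) μ) {c : ℝ≥0∞} (hc : c ≠ 0) (hc' : c ≠ ∞) :
    μ.tilted f = μ.withDensity fun x =>
      c * ENNReal.ofReal (Real.exp (f x)) / ∫⁻ x', c * ENNReal.ofReal (Real.exp (f x')) ∂μ := by
  rcases eq_zero_or_neZero μ with rfl | _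
  · simp
  have hlint : ∫⁻ x, ENNReal.ofReal (Real.exp (f x)) ∂μ =
      ENNReal.ofReal (∫ x, Real.exp (f x) ∂μ) :=
    (ofReal_integral_eq_lintegral_ofReal hf (.of_forall fun x => (Real.exp_pos _).le)).symm
  simp only [lintegral_const_mul' c _ hc', ENNReal.mul_div_mul_left _ _ hc hc', hlint,
    ← ENNReal.ofReal_div_of_pos (integral_exp_pos hf), Measure.tilted]

end Tilted

/-- The posterior law of `X ~ P` given `aX + Z = y`, where `Z ~ N(0, v)` is independent of `X`: the
measure with density proportional to the Gaussian weight with respect to `P`. -/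
noncomputable def gaussianPosterior (P : Measure ℝ) (a : ℝ) (v : ℝ≥0) (y : ℝ) : Measure ℝ :=
  P.tilted fun x => -(y - a * x) ^ 2 / (2 * v)

namespace gaussianPosterior

variable {P : Measure ℝ} {a : ℝ} {v : ℝ≥0} {y : ℝ}

lemma exp_weight_le_one (x : ℝ) : Real.exp (-(y - a * x) ^ 2 / (2 * v)) ≤ 1 :=
  Real.exp_le_one_iff.2 <| by rw [neg_div]; exact neg_nonpos.2 (by positivity)

lemma integrable_exp_weight_mul {g : ℝ → ℝ} (hg : Integrable g P) :
    Integrable (fun x => Real.exp (-(y - a * x) ^ 2 / (2 * v)) * g x) P := by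
  refine hg.bdd_mul (c := 1) (by fun_prop) (.of_forall fun x => ?_)
  rw [Real.norm_of_nonneg (Real.exp_pos _).le]
  exact exp_weight_le_one x

lemma integrable_exp_weight [IsFiniteMeasure P] :
    Integrable (fun x => Real.exp (-(y - a * x) ^ 2 / (2 * v))) P := by
  simpa using integrable_exp_weight_mul (integrable_const (μ := P) (1 : ℝ))

instance isProbabilityMeasure [IsFiniteMeasure P] [NeZero P] :
    IsProbabilityMeasure (gaussianPosterior P a v y) :=
  isProbabilityMeasure_tilted integrable_exp_weight

lemma integrable [IsFiniteMeasure P] {g : ℝ → ℝ} (hg : Integrable g P) :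
    Integrable g (gaussianPosterior P a v y) :=
  (integrable_tilted_iff integrable_exp_weight g).2 (integrable_exp_weight_mul hg)

lemma eq_tilted_zero [IsFiniteMeasure P] :
    gaussianPosterior P a v y = (gaussianPosterior P a v 0).tilted fun x => a / v * y * x := by
  rw [gaussianPosterior, gaussianPosterior, tilted_tilted integrable_exp_weight,
    ← tilted_add_const _ (y ^ 2 / (2 * v))]
  congr 1
  ext x
  simp only [Pi.add_apply]
  ring

lemma integrableExpSet_id_zero [IsFiniteMeasure P] (ha : a ≠ 0) (hv : v ≠ 0) :
    integrableExpSet id (gaussianPosterior P a v 0) = Set.univ := by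
  refine Set.eq_univ_of_forall fun t => ?_
  -- Completing the square absorbs the factor `exp (t * x)` into a shift of `y` to `v * t / a`.
  have hexp : ∀ x, Real.exp (-(v * t / a - a * x) ^ 2 / (2 * v)) *
      Real.exp (v * t ^ 2 / (2 * a ^ 2)) =
        Real.exp (-(0 - a * x) ^ 2 / (2 * v)) • Real.exp (t * x) := fun x => by
    rw [smul_eq_mul, ← Real.exp_add, ← Real.exp_add]
    congr 1
    have : (v : ℝ) ≠ 0 := NNReal.coe_ne_zero.2 hv
    field_simp
    ring
  refine (integrable_tilted_iff integrable_exp_weight _).2 ?_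
  exact (integrable_exp_weight.mul_const _).congr (.of_forall hexp)

lemma hasDerivAt_integral [IsFiniteMeasure P] (hv : v ≠ 0) (y : ℝ) :
    HasDerivAt (fun y => ∫ x, x ∂(gaussianPosterior P a v y))
      (a / v * Var[id; gaussianPosterior P a v y]) y := by
  rcases eq_or_ne a 0 with rfl | ha
  · simp [gaussianPosterior, hasDerivAt_const]
  have ht : a / v * y ∈ interior (integrableExpSet id (gaussianPosterior P a v 0)) := by
    simp [integrableExpSet_id_zero ha hv]
  have hchain := (hasDerivAt_integral_tilted_mul ht).comp y
    ((hasDerivAt_id y).const_mul (a / v : ℝ))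
  simp only [id, mul_one, ← eq_tilted_zero, Function.comp_def] at hchain
  rw [mul_comm]
  exact hchain

lemma integral_pow_eq_div (n : ℕ) :
    ∫ x, x ^ n ∂(gaussianPosterior P a v y) =
      (∫ x, x ^ n * Real.exp (-(y - a * x) ^ 2 / (2 * v)) ∂P) /
        ∫ x, x ^ 0 * Real.exp (-(y - a * x) ^ 2 / (2 * v)) ∂P := by
  simp only [gaussianPosterior, integral_tilted_eq_div, pow_zero, one_mul]

lemma variance_id_eq_sub [IsFiniteMeasure P] [NeZero P] (hP : Integrable (fun x => x ^ 2) P) :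
    Var[id; gaussianPosterior P a v y] =
      ∫ x, x ^ 2 ∂(gaussianPosterior P a v y) - (∫ x, x ∂(gaussianPosterior P a v y)) ^ 2 :=
  variance_eq_sub ((memLp_two_iff_integrable_sq aestronglyMeasurable_id).2 (integrable hP))

lemma bayesKernel_gaussianPDF [IsFiniteMeasure P] (hv : v ≠ 0) (y : ℝ) :
    bayesKernel P (fun p => gaussianPDF 0 v (-(a * p.2) + p.1)) y = gaussianPosterior P a v y := by
  have hc : 0 < (√(2 * Real.pi * v))⁻¹ := by
    have : 0 < v := pos_iff_ne_zero.2 hv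
    positivity
  have hpdf : ∀ x, gaussianPDF 0 v (-(a * x) + y) = ENNReal.ofReal (√(2 * Real.pi * v))⁻¹ *
      ENNReal.ofReal (Real.exp (-(y - a * x) ^ 2 / (2 * v))) := fun x => by
    rw [gaussianPDF, gaussianPDFReal, ENNReal.ofReal_mul hc.le, sub_zero, neg_add_eq_sub]
  rw [bayesKernel_apply (by fun_prop), gaussianPosterior,
    tilted_eq_withDensity_div_lintegral integrable_exp_weight (ENNReal.ofReal_pos.2 hc).ne'
      ENNReal.ofReal_ne_top]
  simp only [hpdf]

variable {Ω : Type*} [MeasurableSpace Ω] {μ : Measure Ω} [IsFiniteMeasure μ] {X Z : Ω → ℝ}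

lemma condDistrib_ae_eq (hX : Measurable X) (hZ : Measurable Z) (hXZ : IndepFun X Z μ)
    (hv : v ≠ 0) (hZlaw : μ.map Z = gaussianReal 0 v) :
    ∀ᵐ y ∂μ.map (fun ω => a * X ω + Z ω),
      condDistrib X (fun ω => a * X ω + Z ω) μ y = gaussianPosterior (μ.map X) a v y := by
  rw [gaussianReal_of_var_ne_zero 0 hv] at hZlaw
  have hlaw := map_add_prodMk_eq_withDensity hXZ hX hZ (measurable_const_mul a)
    (measurable_gaussianPDF 0 v) hZlaw
  filter_upwards [condDistrib_ae_eq_bayesKernel hX (by fun_prop) hlaw] with y hy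
  rw [hy, bayesKernel_gaussianPDF hv]

lemma condExp_ae_eq (hX : Measurable X) (hZ : Measurable Z) (hXZ : IndepFun X Z μ)
    (hv : v ≠ 0) (hZlaw : μ.map Z = gaussianReal 0 v) (hX_int : Integrable X μ) :
    μ[X | MeasurableSpace.comap (fun ω => a * X ω + Z ω) inferInstance] =ᵐ[μ]
      fun ω => ∫ x, x ∂(gaussianPosterior (μ.map X) a v (a * X ω + Z ω)) := by
  have hY : Measurable fun ω => a * X ω + Z ω := by fun_prop
  filter_upwards [condExp_ae_eq_integral_condDistrib' hY hX_int,
    ae_of_ae_map hY.aemeasurable (condDistrib_ae_eq hX hZ hXZ hv hZlaw)] with ω hexp hlaw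
  rw [hexp, hlaw]

end gaussianPosterior

/-- Posterior mean for the Gaussian channel `Y = aX + Z`,
`Z ~ N(0, σ²)` independent of `X ~ P`, with `∫ x² dP < ∞`.  With
`μ_i(y) = ∫ x^i exp(−(y−ax)²/(2σ²)) dP(x)` and `f = μ₁/μ₀` (the posterior-mean function):
(i) `E[X f(Y)] = E[f(Y)²]`; (ii) `f` is differentiable with
`f'(y) = (a/σ²)(μ₂(y)/μ₀(y) − (μ₁(y)/μ₀(y))²)`. -/
theorem posterior_mean_gaussian_channel
    {Ω : Type*} [MeasureSpace Ω] [IsProbabilityMeasure (ℙ : Measure Ω)]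
    (P : Measure ℝ) [IsProbabilityMeasure P]
    (hP2 : Integrable (fun x => x ^ 2) P)
    (a : ℝ) (v : NNReal) (hv : 0 < v)
    (X Z : Ω → ℝ) (hXm : Measurable X) (hZm : Measurable Z)
    (hXlaw : Measure.map X ℙ = P)
    (hZlaw : Measure.map Z ℙ = gaussianReal 0 v)
    (hindep : IndepFun X Z)
    (Y : Ω → ℝ) (hY : Y = fun ω => a * X ω + Z ω)
    (μ : ℕ → ℝ → ℝ)
    (hμ : ∀ i y, μ i y = ∫ x, x ^ i * Real.exp (-(y - a * x) ^ 2 / (2 * (v : ℝ))) ∂P)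
    (f : ℝ → ℝ) (hf : ∀ y, f y = μ 1 y / μ 0 y) :
    (∫ ω, X ω * f (Y ω)) = (∫ ω, f (Y ω) ^ 2) ∧
      ∀ y : ℝ,
        HasDerivAt f ((a / (v : ℝ)) * (μ 2 y / μ 0 y - (μ 1 y / μ 0 y) ^ 2)) y := by
  subst hXlaw hY
  have hX2 : MemLp X 2 ℙ := (memLp_two_iff_integrable_sq hXm.aestronglyMeasurable).2 <|
    hP2.comp_measurable hXm
  have hμ_div : ∀ n y, ∫ x, x ^ n ∂(gaussianPosterior (Measure.map X ℙ) a v y) = μ n y / μ 0 y :=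
    fun n y => by rw [gaussianPosterior.integral_pow_eq_div, hμ, hμ]
  have hf_mean : f = fun y => ∫ x, x ∂(gaussianPosterior (Measure.map X ℙ) a v y) :=
    funext fun y => by simpa only [hf, pow_one] using (hμ_div 1 y).symm
  constructor
  · have hcond := gaussianPosterior.condExp_ae_eq (a := a) hXm hZm hindep hv.ne' hZlaw
      (hX2.integrable one_le_two)
    have hYm : Measurable fun ω => a * X ω + Z ω := by fun_prop
    have hproj := integral_mul_condExp_eq_integral_sq_condExp hYm.comap_le hX2
    rw [integral_congr_ae (hcond.mono fun ω h => congrArg (X ω * ·) h),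
      integral_congr_ae (hcond.mono fun ω h => congrArg (· ^ 2) h)] at hproj
    simpa only [hf_mean] using hproj
  · intro y
    rw [← hf, ← hμ_div 2 y, hf_mean, ← gaussianPosterior.variance_id_eq_sub hP2]
    exact gaussianPosterior.hasDerivAt_integral hv.ne' y
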